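/- If f'(x_i) = 0 for some data point x_i, then either the mean shift sequence (y_j) converges to one of the data points x_i satisfying f'(x_i) = 0, or there exists N such that the sequence (y_j)_{j ≥ N} is monotone (and hence convergent). -/

import Mathlib

open Filter Finset

/-!
The mean shift map `T` sends `z` to the weighted mean of the data with weights
`g ((‖z - x i‖ / h) ^ 2)`. Replacing `z` by `T z` decreases the energy
`∑ i, ∫ t in 0..(‖z - x i‖ / h) ^ 2, g t` by at least a constant times `‖T z - z‖ ^ 2`, so the steps
of every orbit tend to zero. On the line, an orbit oscillating between two levels would then have
every point between them as a cluster point; all of these would be fixed points, and the orbit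
would become stationary on reaching one of them. Hence every orbit converges, to a fixed point `s`.

Near `s` there is no data point other than possibly `s` itself, and as long as `z` moves inside an
interval free of data points, moving to the right increases the weights of the data on the right and
decreases those of the data on the left, so that `T` is increasing between points which it keeps
inside the interval. Hence the orbit eventually stays on one side of `s` and is monotone.
-/

section CenterMass

variable {ι E : Type*} {t : Finset ι}

lemma sum_smul_sub_eq_sum_smul_centerMass_sub {R : Type*} [Field R] [AddCommGroup E] [Module R E]
    {w : ι → R} (hw : ∑ i ∈ t, w i ≠ 0) (x : ι → E) (d : E) :
    ∑ i ∈ t, w i • (x i - d) = (∑ i ∈ t, w i) • (t.centerMass w x - d) := by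
  simp only [smul_sub, Finset.centerMass, smul_inv_smul₀ hw, sum_sub_distrib, sum_smul]

open scoped InnerProductSpace in
lemma sum_mul_norm_sub_sq_eq_add_norm_sub_centerMass_sq
    [NormedAddCommGroup E] [InnerProductSpace ℝ E]
    {w : ι → ℝ} (hw : ∑ i ∈ t, w i ≠ 0) (x : ι → E) (z : E) :
    ∑ i ∈ t, w i * ‖z - x i‖ ^ 2 = ∑ i ∈ t, w i * ‖t.centerMass w x - x i‖ ^ 2 +
      (∑ i ∈ t, w i) * ‖t.centerMass w x - z‖ ^ 2 := by
  set c := t.centerMass w x with hc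
  have cross_term : ∑ i ∈ t, w i * ⟪c - z, x i - c⟫_ℝ = 0 := by
    simp only [← real_inner_smul_right, ← inner_sum, hc, sum_smul_sub_eq_sum_smul_centerMass_sub hw,
      sub_self, smul_zero, inner_zero_right]
  have expand : ∀ i, ‖z - x i‖ ^ 2 =
      ‖c - x i‖ ^ 2 + ‖c - z‖ ^ 2 + 2 * ⟪c - z, x i - c⟫_ℝ := fun i => by
    rw [norm_sub_rev z, norm_sub_rev c (x i), ← sub_add_sub_cancel (x i) c z, norm_add_sq_real,
      real_inner_comm]
    ring
  calc ∑ i ∈ t, w i * ‖z - x i‖ ^ 2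
      = ∑ i ∈ t, w i * ‖c - x i‖ ^ 2 + (∑ i ∈ t, w i) * ‖c - z‖ ^ 2 +
          2 * ∑ i ∈ t, w i * ⟪c - z, x i - c⟫_ℝ := by
        rw [sum_mul, mul_sum, ← sum_add_distrib, ← sum_add_distrib]
        exact sum_congr rfl fun i _ => by rw [expand]; ring
    _ = _ := by rw [cross_term, mul_zero, add_zero]

end CenterMass

lemma mul_sub_le_integral_of_antitoneOn {g : ℝ → ℝ} {a b : ℝ} (hg : AntitoneOn g (Set.uIcc a b)) :
    g a * (a - b) ≤ ∫ t in b..a, g t := by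
  have hint : IntervalIntegrable g MeasureTheory.volume a b := hg.intervalIntegrable
  have hconst : g a * (a - b) = ∫ _ in b..a, g a := by
    rw [intervalIntegral.integral_const, smul_eq_mul, mul_comm]
  rw [hconst]
  rcases le_total a b with hab | hba
  · rw [Set.uIcc_of_le hab] at hg
    rw [intervalIntegral.integral_symm, intervalIntegral.integral_symm a b, neg_le_neg_iff]
    exact intervalIntegral.integral_mono_on hab hint intervalIntegrable_const
      fun t ht => hg (Set.left_mem_Icc.2 hab) ht ht.1
  · rw [Set.uIcc_of_ge hba] at hg
    exact intervalIntegral.integral_mono_on hba intervalIntegrable_const hint.symm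
      fun t ht => hg ht (Set.right_mem_Icc.2 hba) ht.2

lemma tendsto_sub_succ_of_antitone {u : ℕ → ℝ} (hu : Antitone u)
    (hbdd : BddBelow (Set.range u)) :
    Tendsto (fun j => u j - u (j + 1)) atTop (nhds 0) := by
  have hlim := tendsto_atTop_ciInf hu hbdd
  simpa only [sub_self, Function.comp_def] using hlim.sub (hlim.comp (tendsto_add_atTop_nat 1))

section MeanShift

variable {ι E : Type*} [NormedAddCommGroup E] {g : ℝ → ℝ} {h : ℝ} {x : ι → E}

/-- The weight that the mean shift map at `z` gives to the data point `x i`, for the profile `g`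
and the bandwidth `h`. -/
noncomputable def meanShiftWeight (g : ℝ → ℝ) (h : ℝ) (x : ι → E) (z : E) (i : ι) : ℝ :=
  g ((‖z - x i‖ / h) ^ 2)

lemma meanShiftWeight_pos (hg_pos : ∀ t ∈ Set.Ici (0 : ℝ), 0 < g t) (z : E) (i : ι) :
    0 < meanShiftWeight g h x z i :=
  hg_pos _ (Set.mem_Ici.2 (sq_nonneg _))

lemma continuous_meanShiftWeight (hg_cont : ContinuousOn g (Set.Ici 0)) (i : ι) :
    Continuous fun z => meanShiftWeight g h x z i :=
  hg_cont.comp_continuous (by fun_prop) fun _ => Set.mem_Ici.2 (sq_nonneg _)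

variable [Fintype ι]

/-- The mean shift map of the data `x`: the center of mass of the data for the weights
`meanShiftWeight g h x z`. -/
noncomputable def meanShift [Module ℝ E] (g : ℝ → ℝ) (h : ℝ) (x : ι → E) (z : E) : E :=
  univ.centerMass (meanShiftWeight g h x z) x

/-- The energy that the mean shift map decreases. When `g = -k'` it equals
`∑ i, (k 0 - k ((‖z - x i‖ / h) ^ 2))`, that is, minus the kernel density estimate with profile `k`
up to a positive factor and an additive constant. -/
noncomputable def meanShiftEnergy (g : ℝ → ℝ) (h : ℝ) (x : ι → E) (z : E) : ℝ :=
  ∑ i, ∫ t in 0..(‖z - x i‖ / h) ^ 2, g t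

lemma meanShiftEnergy_nonneg (hg_nonneg : ∀ t ∈ Set.Ici (0 : ℝ), 0 ≤ g t) (z : E) :
    0 ≤ meanShiftEnergy g h x z :=
  sum_nonneg fun _ _ =>
    intervalIntegral.integral_nonneg (sq_nonneg _) fun t ht => hg_nonneg t ht.1

lemma sum_meanShiftWeight_mul_sub_le_meanShiftEnergy_sub (hg_anti : AntitoneOn g (Set.Ici 0))
    (z v : E) :
    ∑ i, meanShiftWeight g h x z i * ((‖z - x i‖ / h) ^ 2 - (‖v - x i‖ / h) ^ 2) ≤
      meanShiftEnergy g h x z - meanShiftEnergy g h x v := by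
  have anti_between {a b : ℝ} (ha : 0 ≤ a) (hb : 0 ≤ b) : AntitoneOn g (Set.uIcc a b) :=
    hg_anti.mono fun t ht => (le_min ha hb).trans ht.1
  rw [meanShiftEnergy, meanShiftEnergy, ← sum_sub_distrib]
  refine sum_le_sum fun i _ => ?_
  rw [intervalIntegral.integral_interval_sub_left
    (anti_between le_rfl (sq_nonneg _)).intervalIntegrable
    (anti_between le_rfl (sq_nonneg _)).intervalIntegrable]
  exact mul_sub_le_integral_of_antitoneOn (anti_between (sq_nonneg _) (sq_nonneg _))

variable [Nonempty ι]

lemma sum_meanShiftWeight_pos (hg_pos : ∀ t ∈ Set.Ici (0 : ℝ), 0 < g t) (z : E) :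
    0 < ∑ i, meanShiftWeight g h x z i :=
  sum_pos (fun i _ => meanShiftWeight_pos hg_pos z i) univ_nonempty

lemma exists_pos_forall_le_sum_meanShiftWeight (hg_cont : ContinuousOn g (Set.Ici 0))
    (hg_pos : ∀ t ∈ Set.Ici (0 : ℝ), 0 < g t) {K : Set E} (hK : IsCompact K) :
    ∃ δ > 0, ∀ z ∈ K, δ ≤ ∑ i, meanShiftWeight g h x z i :=
  hK.exists_forall_le' (continuous_finsetSum _ fun i _ =>
    continuous_meanShiftWeight hg_cont i).continuousOn fun z _ => sum_meanShiftWeight_pos hg_pos z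

section NormedSpace

variable [NormedSpace ℝ E]

lemma continuous_meanShift (hg_cont : ContinuousOn g (Set.Ici 0))
    (hg_pos : ∀ t ∈ Set.Ici (0 : ℝ), 0 < g t) : Continuous (meanShift g h x) :=
  ((continuous_finsetSum _ fun i _ => continuous_meanShiftWeight hg_cont i).inv₀
      fun z => (sum_meanShiftWeight_pos hg_pos z).ne').smul
    (continuous_finsetSum _ fun i _ => (continuous_meanShiftWeight hg_cont i).smul
      continuous_const)

lemma meanShift_mem_convexHull (hg_pos : ∀ t ∈ Set.Ici (0 : ℝ), 0 < g t) (z : E) :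
    meanShift g h x z ∈ convexHull ℝ (Set.range x) :=
  univ.centerMass_mem_convexHull (fun i _ => (meanShiftWeight_pos hg_pos z i).le)
    (sum_meanShiftWeight_pos hg_pos z) fun i _ => Set.mem_range_self i

lemma exists_isCompact_meanShift_orbit (hg_pos : ∀ t ∈ Set.Ici (0 : ℝ), 0 < g t)
    {y : ℕ → E} (hy : ∀ j, y (j + 1) = meanShift g h x (y j)) :
    ∃ K, IsCompact K ∧ ∀ j, y j ∈ K := by
  refine ⟨insert (y 0) (convexHull ℝ (Set.range x)),
    ((Set.finite_range x).isCompact_convexHull ℝ).insert _, fun j => ?_⟩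
  cases j with
  | zero => exact Set.mem_insert _ _
  | succ j => exact Set.mem_insert_of_mem _ (hy j ▸ meanShift_mem_convexHull hg_pos _)

end NormedSpace

section InnerProductSpace

variable [InnerProductSpace ℝ E]

lemma sum_meanShiftWeight_mul_sq_le_meanShiftEnergy_sub
    (hg_pos : ∀ t ∈ Set.Ici (0 : ℝ), 0 < g t) (hg_anti : AntitoneOn g (Set.Ici 0)) (z : E) :
    (∑ i, meanShiftWeight g h x z i) * (‖meanShift g h x z - z‖ / h) ^ 2 ≤
      meanShiftEnergy g h x z - meanShiftEnergy g h x (meanShift g h x z) := by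
  refine le_trans (le_of_eq ?_) (sum_meanShiftWeight_mul_sub_le_meanShiftEnergy_sub hg_anti z _)
  have huygens := sum_mul_norm_sub_sq_eq_add_norm_sub_centerMass_sq
    (sum_meanShiftWeight_pos (h := h) (x := x) hg_pos z).ne' x z
  rw [← meanShift, ← sub_eq_iff_eq_add', ← sum_sub_distrib] at huygens
  simp only [div_pow, ← sub_div, ← mul_sub, ← mul_div_assoc, ← sum_div, ← huygens]

lemma tendsto_norm_sub_meanShift_orbit (hh : h ≠ 0) (hg_cont : ContinuousOn g (Set.Ici 0))
    (hg_pos : ∀ t ∈ Set.Ici (0 : ℝ), 0 < g t) (hg_anti : AntitoneOn g (Set.Ici 0))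
    {y : ℕ → E} (hy : ∀ j, y (j + 1) = meanShift g h x (y j)) :
    Tendsto (fun j => ‖y (j + 1) - y j‖) atTop (nhds 0) := by
  set energy : ℕ → ℝ := fun j => meanShiftEnergy g h x (y j)
  have descent : ∀ j, (∑ i, meanShiftWeight g h x (y j) i) * (‖y (j + 1) - y j‖ / h) ^ 2 ≤
      energy j - energy (j + 1) := fun j => by
    simpa only [energy, hy] using
      sum_meanShiftWeight_mul_sq_le_meanShiftEnergy_sub hg_pos hg_anti (y j)
  have energy_antitone : Antitone energy := antitone_nat_of_succ_le fun j =>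
    sub_nonneg.1 <| (mul_nonneg (sum_meanShiftWeight_pos hg_pos _).le (sq_nonneg _)).trans
      (descent j)
  have energy_bddBelow : BddBelow (Set.range energy) :=
    ⟨0, Set.forall_mem_range.2 fun _ => meanShiftEnergy_nonneg (fun t ht => (hg_pos t ht).le) _⟩
  obtain ⟨K, hK, hyK⟩ := exists_isCompact_meanShift_orbit hg_pos hy
  obtain ⟨δ, hδ, hδ_le⟩ :=
    exists_pos_forall_le_sum_meanShiftWeight (h := h) (x := x) hg_cont hg_pos hK
  have step_sq_le : ∀ j, ‖y (j + 1) - y j‖ ^ 2 ≤ h ^ 2 / δ * (energy j - energy (j + 1)) :=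
    fun j => calc
      ‖y (j + 1) - y j‖ ^ 2 = h ^ 2 / δ * (δ * (‖y (j + 1) - y j‖ / h) ^ 2) := by field_simp
      _ ≤ h ^ 2 / δ * (energy j - energy (j + 1)) := by
        gcongr
        exact (mul_le_mul_of_nonneg_right (hδ_le _ (hyK j)) (sq_nonneg _)).trans (descent j)
  have step_sq_tendsto : Tendsto (fun j => ‖y (j + 1) - y j‖ ^ 2) atTop (nhds 0) :=
    squeeze_zero (fun _ => sq_nonneg _) step_sq_le
      (by simpa only [mul_zero] using
        (tendsto_sub_succ_of_antitone energy_antitone energy_bddBelow).const_mul (h ^ 2 / δ))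
  simpa only [Real.sqrt_sq (norm_nonneg _), Real.sqrt_zero] using step_sq_tendsto.sqrt

end InnerProductSpace

end MeanShift

lemma exists_mem_Ioo_forall_eq_of_finite {α : Type*} [LinearOrder α] [TopologicalSpace α]
    [OrderTopology α] [NoMinOrder α] [NoMaxOrder α] {D : Set α} (hD : D.Finite) (s : α) :
    ∃ p q, s ∈ Set.Ioo p q ∧ ∀ t ∈ D, t ∈ Set.Ioo p q → t = s := by
  have : (D \ {s})ᶜ ∈ nhds s :=
    hD.sdiff.isClosed.isOpen_compl.mem_nhds fun hs => hs.2 rfl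
  obtain ⟨p, q, hs, hpq⟩ := mem_nhds_iff_exists_Ioo_subset.1 this
  exact ⟨p, q, hs, fun t htD ht => by_contra fun hts => hpq ht ⟨htD, hts⟩⟩

section Orbit

lemma frequently_le_and_lt_succ {α : Type*} [LinearOrder α] {u : ℕ → α} {c : α}
    (hle : ∃ᶠ j in atTop, u j ≤ c) (hlt : ∃ᶠ j in atTop, c < u j) :
    ∃ᶠ j in atTop, u j ≤ c ∧ c < u (j + 1) := by
  intro no_crossing
  obtain ⟨N, hN⟩ := eventually_atTop.1 no_crossing
  obtain ⟨m, hNm, hm⟩ := frequently_atTop.1 hle N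
  obtain ⟨p, hmp, hp⟩ := frequently_atTop.1 hlt m
  have stays_le : ∀ j ≥ m, u j ≤ c := fun j hj => by
    induction j, hj using Nat.le_induction with
    | base => exact hm
    | succ j hj ih => exact not_lt.1 fun hlt => hN j (hNm.trans hj) ⟨ih, hlt⟩
  exact (stays_le p hmp).not_gt hp

lemma mapClusterPt_of_frequently_le_of_frequently_lt {u : ℕ → ℝ} {c : ℝ}
    (hstep : Tendsto (fun j => ‖u (j + 1) - u j‖) atTop (nhds 0))
    (hle : ∃ᶠ j in atTop, u j ≤ c) (hlt : ∃ᶠ j in atTop, c < u j) :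
    MapClusterPt c atTop u := by
  refine Metric.nhds_basis_ball.mapClusterPt_iff_frequently.2 fun ε hε => ?_
  have small_crossing :=
    (frequently_le_and_lt_succ hle hlt).and_eventually (hstep.eventually_lt_const hε)
  refine small_crossing.mono fun j ⟨⟨_, _⟩, hjε⟩ => ?_
  rw [Real.norm_eq_abs, abs_lt] at hjε
  rw [Metric.mem_ball, Real.dist_eq, abs_lt]
  constructor <;> linarith

lemma isFixedPt_of_mapClusterPt_orbit {E : Type*} [NormedAddCommGroup E] {T : E → E} {y : ℕ → E}
    {c : E} (hT : ContinuousAt T c) (hy : ∀ j, y (j + 1) = T (y j))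
    (hstep : Tendsto (fun j => ‖y (j + 1) - y j‖) atTop (nhds 0)) (hc : MapClusterPt c atTop y) :
    Function.IsFixedPt T c := by
  have cluster : MapClusterPt ‖T c - c‖ atTop fun j => ‖y (j + 1) - y j‖ := by
    simpa only [hy, Function.comp_def] using
      hc.continuousAt_comp (f := fun z => ‖T z - z‖) (hT.sub continuousAt_id).norm
  have : ‖T c - c‖ = 0 :=
    eq_of_nhds_neBot (NeBot.mono cluster (inf_le_inf_left _ hstep))
  exact sub_eq_zero.1 (norm_eq_zero.1 this)

lemma orbit_eq_of_isFixedPt {α : Type*} {T : α → α} {y : ℕ → α}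
    (hy : ∀ j, y (j + 1) = T (y j)) {j : ℕ} (hj : Function.IsFixedPt T (y j)) :
    ∀ m ≥ j, y m = y j := fun m hm => by
  induction m, hm using Nat.le_induction with
  | base => rfl
  | succ m _ ih => rw [hy, ih, hj]

lemma exists_tendsto_of_orbit {T : ℝ → ℝ} (hT : Continuous T) {y : ℕ → ℝ}
    (hy : ∀ j, y (j + 1) = T (y j)) (hbdd : Bornology.IsBounded (Set.range y))
    (hstep : Tendsto (fun j => ‖y (j + 1) - y j‖) atTop (nhds 0)) :
    ∃ s, Tendsto y atTop (nhds s) := by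
  refine tendsto_of_no_upcrossings dense_univ ?_ hbdd.bddAbove.isBoundedUnder_of_range
    hbdd.bddBelow.isBoundedUnder_of_range
  rintro a - b - hab ⟨hlt_a, hgt_b⟩
  have cluster : ∀ c ∈ Set.Ioo a b, MapClusterPt c atTop y := fun c hc =>
    mapClusterPt_of_frequently_le_of_frequently_lt hstep
      (hlt_a.mono fun _ hj => (hj.trans hc.1).le) (hgt_b.mono fun _ hj => hc.2.trans hj)
  obtain ⟨c, hc⟩ := Set.nonempty_Ioo.2 hab
  obtain ⟨j, hj⟩ := ((cluster c hc).frequently (Ioo_mem_nhds hc.1 hc.2)).exists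
  have hfix := isFixedPt_of_mapClusterPt_orbit hT.continuousAt hy hstep (cluster (y j) hj)
  obtain ⟨m, hjm, hm⟩ := frequently_atTop.1 hlt_a j
  exact hm.not_gt (orbit_eq_of_isFixedPt hy hfix m hjm ▸ hj.1)

lemma monotone_or_antitone_of_monotoneOn_orbit {α : Type*} [LinearOrder α] {T : α → α} {y : ℕ → α}
    (hy : ∀ j, y (j + 1) = T (y j)) (hT : MonotoneOn T (Set.range y)) :
    Monotone y ∨ Antitone y := by
  have propagate : ∀ j k, y j ≤ y k → y (j + 1) ≤ y (k + 1) := fun j k hjk => by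
    simpa only [hy] using hT (Set.mem_range_self j) (Set.mem_range_self k) hjk
  rcases le_total (y 0) (y 1) with h01 | h10
  · exact .inl <| monotone_nat_of_le_succ fun j => Nat.rec h01 (fun j => propagate j (j + 1)) j
  · exact .inr <| antitone_nat_of_succ_le fun j => Nat.rec h10 (fun j => propagate (j + 1) j) j

end Orbit

section Line

variable {ι : Type*} [Fintype ι] {g : ℝ → ℝ} {h : ℝ} {x : ι → ℝ}

lemma meanShift_eq_div (z : ℝ) :
    meanShift g h x z = (∑ i, x i * g (((z - x i) / h) ^ 2)) / ∑ i, g (((z - x i) / h) ^ 2) := by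
  simp only [meanShift, centerMass, meanShiftWeight, smul_eq_mul, Real.norm_eq_abs, div_pow, sq_abs,
    mul_comm (x _)]
  exact (div_eq_inv_mul _ _).symm

variable [Nonempty ι]

lemma sum_meanShiftWeight_mul_meanShift_sub_le
    (hg_pos : ∀ t ∈ Set.Ici (0 : ℝ), 0 < g t) (hg_anti : AntitoneOn g (Set.Ici 0)) {p q a b d : ℝ}
    (hgap : ∀ i, x i ∉ Set.Ioo p q) (ha : a ∈ Set.Icc p q) (hb : b ∈ Set.Icc p q)
    (hd : d ∈ Set.Icc p q) (hab : a ≤ b) :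
    (∑ i, meanShiftWeight g h x a i) * (meanShift g h x a - d) ≤
      (∑ i, meanShiftWeight g h x b i) * (meanShift g h x b - d) := by
  have weight_le {a b : ℝ} {i : ι} (hdist : |b - x i| ≤ |a - x i|) :
      meanShiftWeight g h x a i ≤ meanShiftWeight g h x b i := by
    refine hg_anti (Set.mem_Ici.2 (sq_nonneg _)) (Set.mem_Ici.2 (sq_nonneg _)) ?_
    rw [div_pow, div_pow, Real.norm_eq_abs, Real.norm_eq_abs]
    gcongr
  simp only [← smul_eq_mul, meanShift,
    ← sum_smul_sub_eq_sum_smul_centerMass_sub (sum_meanShiftWeight_pos hg_pos _).ne']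
  refine sum_le_sum fun i _ => ?_
  rcases le_or_gt (x i) p with hxp | hpx
  · refine mul_le_mul_of_nonpos_right (weight_le ?_) (sub_nonpos.2 (hxp.trans hd.1))
    rw [abs_of_nonneg (by linarith [ha.1]), abs_of_nonneg (by linarith [hb.1])]
    linarith
  · have hqx : q ≤ x i := not_lt.1 fun hxq => hgap i ⟨hpx, hxq⟩
    refine mul_le_mul_of_nonneg_right (weight_le ?_) (sub_nonneg.2 (hd.2.trans hqx))
    rw [abs_of_nonpos (by linarith [hb.2]), abs_of_nonpos (by linarith [ha.2])]
    linarith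

lemma le_meanShift_of_le_meanShift
    (hg_pos : ∀ t ∈ Set.Ici (0 : ℝ), 0 < g t) (hg_anti : AntitoneOn g (Set.Ici 0)) {p q a b d : ℝ}
    (hgap : ∀ i, x i ∉ Set.Ioo p q) (ha : a ∈ Set.Icc p q) (hb : b ∈ Set.Icc p q)
    (hd : d ∈ Set.Icc p q) (hab : a ≤ b) (hda : d ≤ meanShift g h x a) :
    d ≤ meanShift g h x b :=
  sub_nonneg.1 <| nonneg_of_mul_nonneg_right
    ((mul_nonneg (sum_meanShiftWeight_pos hg_pos a).le (sub_nonneg.2 hda)).trans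
      (sum_meanShiftWeight_mul_meanShift_sub_le hg_pos hg_anti hgap ha hb hd hab))
    (sum_meanShiftWeight_pos hg_pos b)

lemma meanShift_le_of_meanShift_le
    (hg_pos : ∀ t ∈ Set.Ici (0 : ℝ), 0 < g t) (hg_anti : AntitoneOn g (Set.Ici 0)) {p q a b d : ℝ}
    (hgap : ∀ i, x i ∉ Set.Ioo p q) (ha : a ∈ Set.Icc p q) (hb : b ∈ Set.Icc p q)
    (hd : d ∈ Set.Icc p q) (hab : a ≤ b) (hbd : meanShift g h x b ≤ d) :
    meanShift g h x a ≤ d :=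
  sub_nonpos.1 <| nonpos_of_mul_nonpos_right
    ((sum_meanShiftWeight_mul_meanShift_sub_le hg_pos hg_anti hgap ha hb hd hab).trans
      (mul_nonpos_of_nonneg_of_nonpos (sum_meanShiftWeight_pos hg_pos b).le (sub_nonpos.2 hbd)))
    (sum_meanShiftWeight_pos hg_pos a)

lemma monotone_or_antitone_of_meanShift_orbit_mem_Icc
    (hg_pos : ∀ t ∈ Set.Ici (0 : ℝ), 0 < g t) (hg_anti : AntitoneOn g (Set.Ici 0)) {p q : ℝ}
    (hgap : ∀ i, x i ∉ Set.Ioo p q) {y : ℕ → ℝ} (hy : ∀ j, y (j + 1) = meanShift g h x (y j))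
    (hmem : ∀ j, y j ∈ Set.Icc p q) :
    Monotone y ∨ Antitone y := by
  refine monotone_or_antitone_of_monotoneOn_orbit hy ?_
  rintro _ ⟨j, rfl⟩ _ ⟨k, rfl⟩ hjk
  exact le_meanShift_of_le_meanShift hg_pos hg_anti hgap (hmem j) (hmem k) (hy j ▸ hmem (j + 1))
    hjk le_rfl

lemma exists_monotone_or_antitone_tail_of_meanShift_orbit
    (hg_pos : ∀ t ∈ Set.Ici (0 : ℝ), 0 < g t) (hg_anti : AntitoneOn g (Set.Ici 0))
    {y : ℕ → ℝ} (hy : ∀ j, y (j + 1) = meanShift g h x (y j)) {s : ℝ}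
    (hs : Tendsto y atTop (nhds s)) (hfix : Function.IsFixedPt (meanShift g h x) s) :
    ∃ N, Monotone (fun j => y (N + j)) ∨ Antitone (fun j => y (N + j)) := by
  obtain ⟨p, q, ⟨hps, hsq⟩, hpq⟩ := exists_mem_Ioo_forall_eq_of_finite (Set.finite_range x) s
  obtain ⟨N, hN⟩ := eventually_atTop.1 (hs.eventually (Ioo_mem_nhds hps hsq))
  have hmem : ∀ j, y (N + j) ∈ Set.Ioo p q := fun j => hN _ (Nat.le_add_right N j)
  have hy_tail : ∀ j, y (N + (j + 1)) = meanShift g h x (y (N + j)) := fun j => hy (N + j)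
  refine ⟨N, ?_⟩
  rcases le_total s (y N) with hsy | hys
  · have hgap : ∀ i, x i ∉ Set.Ioo s q := fun i hi =>
      hi.1.ne' (hpq _ (Set.mem_range_self i) ⟨hps.trans hi.1, hi.2⟩)
    have right_of_s : ∀ j, s ≤ y (N + j) := fun j => by
      induction j with
      | zero => exact hsy
      | succ j ih =>
        exact hy_tail j ▸ le_meanShift_of_le_meanShift hg_pos hg_anti hgap ⟨le_rfl, hsq.le⟩
          ⟨ih, (hmem j).2.le⟩ ⟨le_rfl, hsq.le⟩ ih hfix.ge
    exact monotone_or_antitone_of_meanShift_orbit_mem_Icc hg_pos hg_anti hgap hy_tail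
      fun j => ⟨right_of_s j, (hmem j).2.le⟩
  · have hgap : ∀ i, x i ∉ Set.Ioo p s := fun i hi =>
      hi.2.ne (hpq _ (Set.mem_range_self i) ⟨hi.1, hi.2.trans hsq⟩)
    have left_of_s : ∀ j, y (N + j) ≤ s := fun j => by
      induction j with
      | zero => exact hys
      | succ j ih =>
        exact hy_tail j ▸ meanShift_le_of_meanShift_le hg_pos hg_anti hgap
          ⟨(hmem j).1.le, ih⟩ ⟨hps.le, le_rfl⟩ ⟨hps.le, le_rfl⟩ ih hfix.le
    exact monotone_or_antitone_of_meanShift_orbit_mem_Icc hg_pos hg_anti hgap hy_tail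
      fun j => ⟨(hmem j).1.le, left_of_s j⟩

end Line

theorem mean_shift_of_deriv_zero_at_data_point_general {ι : Type*} [Fintype ι] [Nonempty ι]
    {x : ι → ℝ} {h : ℝ} (hh : h ≠ 0) {g : ℝ → ℝ} (hg_cont : ContinuousOn g (Set.Ici 0))
    (hg_pos : ∀ t ∈ Set.Ici (0 : ℝ), 0 < g t) (hg_anti : AntitoneOn g (Set.Ici 0))
    {y : ℕ → ℝ} (hy : ∀ j, y (j + 1) = meanShift g h x (y j)) :
    ∃ N : ℕ, ((∀ j ≥ N, y j ≤ y (j + 1)) ∨ (∀ j ≥ N, y (j + 1) ≤ y j)) ∧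
      ∃ ystar : ℝ, Tendsto y atTop (nhds ystar) := by
  have hT : Continuous (meanShift g h x) := continuous_meanShift hg_cont hg_pos
  have hstep := tendsto_norm_sub_meanShift_orbit hh hg_cont hg_pos hg_anti hy
  obtain ⟨K, hK, hyK⟩ := exists_isCompact_meanShift_orbit hg_pos hy
  obtain ⟨s, hs⟩ := exists_tendsto_of_orbit hT hy
    (hK.isBounded.subset (Set.range_subset_iff.2 hyK)) hstep
  obtain ⟨N, hN⟩ := exists_monotone_or_antitone_tail_of_meanShift_orbit hg_pos hg_anti hy hs
    (isFixedPt_of_mapClusterPt_orbit hT.continuousAt hy hstep hs.mapClusterPt)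
  refine ⟨N, hN.imp (fun hmono j hj => ?_) (fun hanti j hj => ?_), s, hs⟩
  · obtain ⟨m, rfl⟩ := Nat.exists_eq_add_of_le hj
    exact hmono m.le_succ
  · obtain ⟨m, rfl⟩ := Nat.exists_eq_add_of_le hj
    exact hanti m.le_succ

theorem mean_shift_of_deriv_zero_at_data_point
(n : ℕ) (hn : 0 < n) (x : Fin n → ℝ) (h : ℝ) (hh : 0 < h)
(c : ℝ) (hc : 0 < c)
    (k g : ℝ → ℝ)
    (hk_nonneg : ∀ t ∈ Set.Ici (0:ℝ), 0 ≤ k t)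
    (hk_conv : ConvexOn ℝ (Set.Ici 0) k)
    (hk_smooth : ContDiff ℝ 1 k)
    (hk_anti : StrictAntiOn k (Set.Ici 0))
    (hg : ∀ t, g t = -(deriv k t))
    (hg_pos : ∀ t ∈ Set.Ici (0:ℝ), 0 < g t)
    (hg_anti : StrictAntiOn g (Set.Ici 0))
    (f T : ℝ → ℝ)
    (hf : ∀ z, f z = c / (n * h) * ∑ i, k (((z - x i) / h) ^ 2))
    (hT : ∀ z, T z = (∑ i, x i * g (((z - x i) / h) ^ 2)) / (∑ i, g (((z - x i) / h) ^ 2)))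
(y : ℕ → ℝ) (hy0 : ∃ i, y 0 = x i) (hyit : ∀ j, y (j + 1) = T (y j))
    (hfx : ∃ i, deriv f (x i) = 0) :
    (∃ i, deriv f (x i) = 0 ∧ Tendsto y atTop (nhds (x i))) ∨
      ∃ N : ℕ, ((∀ j ≥ N, y j ≤ y (j + 1)) ∨ (∀ j ≥ N, y (j + 1) ≤ y j)) ∧
        ∃ ystar : ℝ, Tendsto y atTop (nhds ystar) := by
  have : Nonempty (Fin n) := Fin.pos_iff_nonempty.1 hn
  have hg_cont : Continuous g := (funext hg : g = _) ▸ (hk_smooth.continuous_deriv le_rfl).neg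
  exact .inr <| mean_shift_of_deriv_zero_at_data_point_general (x := x) hh.ne' hg_cont.continuousOn
    hg_pos hg_anti.antitoneOn fun j => by rw [hyit, hT, meanShift_eq_div]
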